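/- Let H : [0,1] → ℝ be Hölder continuous with 1/2 < H(x) < 1. Define Φ(s,H) := ∫₀^s w^{H−3/2}·((1+w)^{H−1/2} − 1) dw for s > 0, and the kernel q̃₂(x,y) := c_*(H(x)) · y^{H(x)−1/2} · Φ((x−y)/y, H(x)) for 0 < y < x < 1, q̃₂(x,y) := 0 otherwise. Let Q̃₂ : L²(0,1) → L²(0,1) be a bounded operator with (Q̃₂f)(x) = ∫₀¹ q̃₂(x,y) f(y) dy for every f and almost every x. Then Q̃₂ is compact and there exists C > 0 such that 𝒩(t, Q̃₂) ≤ C · t^{2/3} for all t > 1. -/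

import Mathlib

open MeasureTheory Set Filter Metric
open scoped ENNReal NNReal Real

noncomputable section

/-- Approximation numbers (singular values) of a continuous linear map between
complex normed spaces: `s_k(A) = inf {‖A - F‖ : rank F ≤ k}`. -/
def sVal {E F : Type*} [NormedAddCommGroup E] [NormedAddCommGroup F]
    [NormedSpace ℂ E] [NormedSpace ℂ F] (A : E →L[ℂ] F) (k : ℕ) : ℝ :=
  sInf {c : ℝ | ∃ G : E →L[ℂ] F, LinearMap.rank (G : E →ₗ[ℂ] F) ≤ (k : Cardinal) ∧ c = ‖A - G‖}

/-- Counting function of singular values: `𝒩(t, A) = #{k : s_k(A) > 1/t}`. -/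
def sCount {E F : Type*} [NormedAddCommGroup E] [NormedAddCommGroup F]
    [NormedSpace ℂ E] [NormedSpace ℂ F] (A : E →L[ℂ] F) (t : ℝ) : ℕ :=
  Set.ncard {k : ℕ | 1 / t < sVal A k}

/-- `c_*(H) = (H(2H−1)Γ(3/2−H)/(Γ(2−2H)Γ(H−1/2)))^{1/2}`. -/
def cstar (H : ℝ) : ℝ :=
  Real.sqrt (H * (2 * H - 1) * Real.Gamma (3/2 - H) /
    (Real.Gamma (2 - 2*H) * Real.Gamma (H - 1/2)))

/-- `Φ(s, H) = ∫₀^s w^{H-3/2}((1+w)^{H-1/2} − 1) dw`. -/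
def PhiFn (Hv s : ℝ) : ℝ :=
  ∫ w in Ioo (0:ℝ) s, w ^ (Hv - 3/2) * ((1 + w) ^ (Hv - 1/2) - 1)

/-- The kernel `q̃₂(x, y)`. -/
def qTilde₂ (H : ℝ → ℝ) (x y : ℝ) : ℝ :=
  if 0 < y ∧ y < x ∧ x < 1 then
    cstar (H x) * y ^ (H x - 1/2) * PhiFn (H x) ((x - y) / y)
  else 0

/-- Hölder continuity of exponent `r` on a set. -/
def HolderOn (f : ℝ → ℝ) (r : ℝ) (s : Set ℝ) : Prop :=
  ∃ C : ℝ, ∀ x ∈ s, ∀ y ∈ s, |f x - f y| ≤ C * |x - y| ^ r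


lemma sVal_le_norm {E F : Type*} [NormedAddCommGroup E] [NormedAddCommGroup F]
    [NormedSpace ℂ E] [NormedSpace ℂ F] (A G : E →L[ℂ] F) (k : ℕ)
    (hG : LinearMap.rank (G : E →ₗ[ℂ] F) ≤ (k : Cardinal)) : sVal A k ≤ ‖A - G‖ := by
  apply csInf_le
  · refine ⟨0, ?_⟩
    rintro c ⟨G, -, rfl⟩
    positivity
  · exact ⟨G, hG, rfl⟩

lemma sVal_anti {E F : Type*} [NormedAddCommGroup E] [NormedAddCommGroup F]
    [NormedSpace ℂ E] [NormedSpace ℂ F] (A : E →L[ℂ] F) {k l : ℕ} (hkl : k ≤ l) :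
    sVal A l ≤ sVal A k := by
  apply le_csInf
  · refine ⟨_, 0, ?_, rfl⟩
    simp
  · rintro c ⟨G, hG, rfl⟩
    exact sVal_le_norm A G l (hG.trans (by exact_mod_cast hkl))

lemma greedy {E F : Type*} [NormedAddCommGroup E] [NormedAddCommGroup F]
    [InnerProductSpace ℂ E] [NormedSpace ℂ F] (A : E →L[ℂ] F) (V : Submodule ℂ E)
    [FiniteDimensional ℂ V] (n m : ℕ) (hV : Module.finrank ℂ V ≤ n) (c : ℝ) (hc : 0 ≤ c)
    (h : c < sVal A (n + m)) (k : ℕ) (hk : k ≤ m + 1) :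
    ∃ e : Fin k → E, Orthonormal ℂ e ∧ ∀ i, c < ‖A (e i)‖ ∧ e i ∈ Vᗮ := by
  induction k with
  | zero => exact ⟨Fin.elim0, by constructor <;> intro i <;> exact i.elim0, fun i => i.elim0⟩
  | succ k ih =>
    obtain ⟨e, he, hA⟩ := ih (by omega)
    let U : Submodule ℂ E := Submodule.span ℂ (range e)
    have : FiniteDimensional ℂ U := FiniteDimensional.span_of_finite ℂ (finite_range e)
    let W : Submodule ℂ E := V ⊔ U
    have hU : Module.finrank ℂ U ≤ k := by
      have := finrank_range_le_card (R := ℂ) e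
      simpa [Set.finrank] using this
    have hW : Module.finrank ℂ W ≤ n + m := by
      have := Submodule.finrank_add_le_finrank_add_finrank V U
      change Module.finrank ℂ (V ⊔ U : Submodule ℂ E) ≤ n + m
      omega
    have hrank : LinearMap.rank ((A ∘L W.starProjection : E →L[ℂ] F) : E →ₗ[ℂ] F)
        ≤ ((n + m : ℕ) : Cardinal) := by
      have h1 : LinearMap.rank ((W.starProjection : E →L[ℂ] E) : E →ₗ[ℂ] E)
          ≤ ((n + m : ℕ) : Cardinal) := by
        have : LinearMap.range ((W.starProjection : E →L[ℂ] E) : E →ₗ[ℂ] E) ≤ W := by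
          rintro _ ⟨v, rfl⟩
          exact W.starProjection_apply_mem v
        refine (Submodule.rank_mono this).trans ?_
        rw [← Module.finrank_eq_rank]
        exact_mod_cast hW
      have h2 := LinearMap.lift_rank_comp_le_right
        ((W.starProjection : E →L[ℂ] E) : E →ₗ[ℂ] E) (A : E →ₗ[ℂ] F)
      have h3 : Cardinal.lift (LinearMap.rank ((A ∘L W.starProjection : E →L[ℂ] F) : E →ₗ[ℂ] F)) ≤ _ :=
        h2.trans (Cardinal.lift_le.2 h1)
      rw [Cardinal.lift_natCast] at h3
      exact Cardinal.lift_le_nat_iff.1 h3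
    have hn := h.trans_le (sVal_le_norm A _ _ hrank)
    obtain ⟨v, hv⟩ : ∃ v, c * ‖v‖ < ‖(A - A ∘L W.starProjection) v‖ := by
      by_contra! hcon
      exact absurd (ContinuousLinearMap.opNorm_le_bound _ hc hcon) (not_le.2 hn)
    set u := v - W.starProjection v with hu
    have huW : u ∈ Wᗮ := W.sub_starProjection_mem_orthogonal v
    have huv : ‖u‖ ≤ ‖v‖ := by
      have h0 : inner ℂ (W.starProjection v) u = 0 :=
        Submodule.inner_right_of_mem_orthogonal (W.starProjection_apply_mem v) huW
      have := norm_add_sq_eq_norm_sq_add_norm_sq_of_inner_eq_zero (W.starProjection v) u h0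
      rw [hu, add_sub_cancel, ← hu] at this
      nlinarith [norm_nonneg u, norm_nonneg v, mul_self_nonneg ‖W.starProjection v‖]
    have hAu : c * ‖u‖ < ‖A u‖ := by
      have : (A - A ∘L W.starProjection) v = A u := by simp [hu]
      rw [← this]
      exact (mul_le_mul_of_nonneg_left huv hc).trans_lt hv
    have hu0 : u ≠ 0 := by
      rintro h0
      rw [h0] at hAu
      simp at hAu
    have hupos : 0 < ‖u‖ := norm_pos_iff.2 hu0
    let w : E := ((‖u‖⁻¹ : ℝ) : ℂ) • u
    have hwW : w ∈ Wᗮ := Submodule.smul_mem _ _ huW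
    have hwn : ‖w‖ = 1 := by
      simp [w, norm_smul, hupos.ne']
    have hwe : ∀ i, inner ℂ (e i) w = 0 := fun i =>
      Submodule.inner_right_of_mem_orthogonal
        (Submodule.mem_sup_right (Submodule.subset_span (mem_range_self i))) hwW
    refine ⟨Fin.snoc (α := fun _ => E) e w, ?_, ?_⟩
    · constructor
      · intro i
        refine Fin.lastCases ?_ (fun i => ?_) i
        · simpa using hwn
        · simpa using he.1 i
      · intro i j hij
        induction i using Fin.lastCases with
        | last =>
          induction j using Fin.lastCases with
          | last => exact absurd rfl hij
          | cast j =>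
            simp only [Fin.snoc_last, Fin.snoc_castSucc]
            exact inner_eq_zero_symm.1 (hwe j)
        | cast i =>
          induction j using Fin.lastCases with
          | last =>
            simp only [Fin.snoc_last, Fin.snoc_castSucc]
            exact hwe i
          | cast j =>
            simp only [Fin.snoc_castSucc]
            exact he.2 (fun h => hij (by rw [h]))
    · intro i
      induction i using Fin.lastCases with
      | last =>
        simp only [Fin.snoc_last]
        refine ⟨?_, Submodule.orthogonal_le le_sup_left hwW⟩
        simp only [w, map_smul, norm_smul, Complex.norm_real, norm_inv, norm_norm]
        rw [inv_mul_eq_div, lt_div_iff₀ hupos]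
        exact hAu
      | cast i =>
        simp only [Fin.snoc_castSucc]
        exact hA i

lemma sVal_bound {α : Type*} [MeasurableSpace α] (μ : Measure α) [IsProbabilityMeasure μ]
    (Q : Lp ℂ 2 μ →L[ℂ] Lp ℂ 2 μ) (k : α → Lp ℂ 2 μ)
    (hQ : ∀ f : Lp ℂ 2 μ, ∀ᵐ x ∂μ, (Q f : α → ℂ) x = inner ℂ (k x) f)
    (V : Submodule ℂ (Lp ℂ 2 μ)) [FiniteDimensional ℂ V] (n m : ℕ)
    (hV : Module.finrank ℂ V ≤ n) (δ : ℝ) (hδ : 0 ≤ δ)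
    (hk : ∀ᵐ x ∂μ, ∃ v ∈ V, ‖k x - v‖ ≤ δ) :
    sVal Q (n + m) ≤ δ / Real.sqrt (m + 1) := by
  have hm : (0:ℝ) < m + 1 := by positivity
  have hsm : 0 < Real.sqrt (m + 1) := Real.sqrt_pos.2 hm
  by_contra! hcon
  obtain ⟨e, he, hA⟩ := greedy Q V n m hV _ (by positivity) hcon (m + 1) le_rfl
  have hnorm : ∀ f : Lp ℂ 2 μ, ‖f‖ ^ 2 = ∫ x, ‖(f : α → ℂ) x‖ ^ 2 ∂μ := by
    intro f
    have := L2.inner_def (𝕜 := ℂ) f f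
    rw [inner_self_eq_norm_sq_to_K] at this
    simp only [inner_self_eq_norm_sq_to_K] at this
    have h2 : ((‖f‖ ^ 2 : ℝ) : ℂ) = ((∫ x, ‖(f : α → ℂ) x‖ ^ 2 ∂μ : ℝ) : ℂ) := by
      rw [← integral_complex_ofReal]
      push_cast
      exact this
    exact_mod_cast h2
  have hint : ∀ f : Lp ℂ 2 μ, Integrable (fun x => ‖(f : α → ℂ) x‖ ^ 2) μ := fun f =>
    (Lp.memLp f).integrable_norm_pow (by norm_num)
  have h1 : ∑ i, ‖Q (e i)‖ ^ 2 ≤ δ ^ 2 := by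
    simp_rw [hnorm]
    rw [← integral_finsetSum _ (fun i _ => hint _)]
    have : ∫ x, ∑ i, ‖(Q (e i) : α → ℂ) x‖ ^ 2 ∂μ ≤ ∫ x, δ ^ 2 ∂μ := by
      apply integral_mono_ae (integrable_finsetSum _ (fun i _ => hint _)) (integrable_const _)
      have hall : ∀ᵐ x ∂μ, ∀ i, (Q (e i) : α → ℂ) x = inner ℂ (k x) (e i) :=
        ae_all_iff.2 (fun i => hQ (e i))
      filter_upwards [hall, hk] with x hx ⟨v, hvV, hv⟩
      have h2 : ∀ i, ‖(Q (e i) : α → ℂ) x‖ = ‖inner ℂ (e i) (k x - v)‖ := by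
        intro i
        rw [hx i, inner_sub_right, norm_inner_symm,
          Submodule.inner_left_of_mem_orthogonal hvV (hA i).2, sub_zero]
      simp_rw [h2]
      refine (he.sum_inner_products_le (k x - v) (s := Finset.univ)).trans ?_
      gcongr
    simpa using this
  have h3 : (m + 1 : ℝ) * (δ / Real.sqrt (m + 1)) ^ 2 < ∑ i, ‖Q (e i)‖ ^ 2 := by
    have : ∑ i : Fin (m + 1), (δ / Real.sqrt (m + 1)) ^ 2 < ∑ i, ‖Q (e i)‖ ^ 2 := by
      apply Finset.sum_lt_sum_of_nonempty Finset.univ_nonempty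
      intro i _
      have := (hA i).1
      gcongr
    simpa using this
  rw [div_pow, Real.sq_sqrt hm.le, mul_div_cancel₀ _ hm.ne'] at h3
  linarith

lemma compact_and_count {E : Type*} [NormedAddCommGroup E] [NormedSpace ℂ E] [CompleteSpace E]
    (Q : E →L[ℂ] E) (D : ℝ) (hD : 0 ≤ D)
    (hs : ∀ n : ℕ, 1 ≤ n → sVal Q (n + n) ≤ D / n / Real.sqrt (n + 1)) :
    IsCompactOperator (⇑Q) ∧
    ∃ C : ℝ, 0 < C ∧ ∀ t : ℝ, 1 < t → (sCount Q t : ℝ) ≤ C * t ^ ((2:ℝ)/3) := by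
  constructor
  · have hcl := isClosed_setOfPred_isCompactOperator (σ₁₂ := RingHom.id ℂ) (M₁ := E) (M₂ := E)
    have : Q ∈ closure {f : E →L[ℂ] E | IsCompactOperator f} := by
      rw [Metric.mem_closure_iff]
      intro ε hε
      obtain ⟨n, hn⟩ := exists_nat_gt (D / ε)
      have hn0 : 0 < n := by
        rcases Nat.eq_zero_or_pos n with h | h
        · subst h
          have : 0 ≤ D / ε := by positivity
          simp at hn; linarith
        · exact h
      have hn1 : (1:ℝ) ≤ n := by exact_mod_cast hn0
      have h1 : sVal Q (n + n) < ε := by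
        refine (hs n hn0).trans_lt ?_
        have hsq : 1 ≤ Real.sqrt (n + 1) := by
          rw [Real.one_le_sqrt]; linarith
        refine (div_le_self (by positivity) hsq).trans_lt ?_
        rw [div_lt_iff₀ (by positivity)]
        rw [div_lt_iff₀ hε] at hn
        linarith
      obtain ⟨c, ⟨G, hG, rfl⟩, hc⟩ := exists_lt_of_csInf_lt
        (by exact ⟨_, 0, by simp, rfl⟩) h1
      refine ⟨G, ?_, by rwa [dist_eq_norm]⟩
      have hfin : FiniteDimensional ℂ (LinearMap.range (G : E →ₗ[ℂ] E)) := by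
        apply Module.rank_lt_aleph0_iff.1
        exact hG.trans_lt (Cardinal.natCast_lt_aleph0)
      let R := LinearMap.range (G : E →ₗ[ℂ] E)
      let G' : E →L[ℂ] R := G.codRestrict R (fun x => ⟨x, rfl⟩)
      have : ProperSpace R := FiniteDimensional.proper ℂ R
      have : IsCompactOperator (R.subtypeL : R → E) :=
        isCompactOperator_of_locallyCompactSpace_rng (R.subtypeL)
      exact this.comp_clm G'
    rwa [hcl.closure_eq] at this
  · refine ⟨2 * (D ^ ((2:ℝ)/3) + 1 + 1), by positivity, fun t ht => ?_⟩
    have ht0 : 0 < t := by linarith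
    set n := ⌈(D * t) ^ ((2:ℝ)/3)⌉₊ + 1 with hn
    have hn1 : 1 ≤ n := by omega
    have hnr : (D * t) ^ ((2:ℝ)/3) ≤ n := by
      rw [hn]; push_cast
      linarith [Nat.le_ceil ((D * t) ^ ((2:ℝ)/3))]
    have hnle : (n : ℝ) ≤ (D * t) ^ ((2:ℝ)/3) + 1 + 1 := by
      rw [hn]; push_cast
      linarith [Nat.ceil_lt_add_one (a := (D * t) ^ ((2:ℝ)/3)) (by positivity)]
    have hnpos : (0:ℝ) < n := by exact_mod_cast hn1
    have hsn : sVal Q (n + n) ≤ 1 / t := by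
      refine (hs n hn1).trans ?_
      have h1 : D * t ≤ n * Real.sqrt n := by
        have := Real.rpow_le_rpow (by positivity) hnr (z := 3/2) (by norm_num)
        rw [← Real.rpow_mul (by positivity)] at this
        norm_num at this
        refine this.trans (le_of_eq ?_)
        rw [Real.sqrt_eq_rpow, show (3/2:ℝ) = 1 + 1/2 by norm_num, Real.rpow_add hnpos, Real.rpow_one]
      have h2 : Real.sqrt n ≤ Real.sqrt (n + 1) := Real.sqrt_le_sqrt (by linarith)
      have h3 : 0 < Real.sqrt (n + 1) := Real.sqrt_pos.2 (by positivity)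
      rw [div_div, div_le_div_iff₀ (by positivity) ht0]
      nlinarith
    have hsub : {k : ℕ | 1 / t < sVal Q k} ⊆ (Finset.range (n + n) : Set ℕ) := by
      intro k hk
      simp only [Finset.coe_range, mem_Iio]
      by_contra! hcon
      exact absurd (hk : 1 / t < sVal Q k) (not_lt.2 ((sVal_anti Q hcon).trans hsn))
    have hcard : sCount Q t ≤ n + n := by
      refine (Set.ncard_le_ncard hsub (Finset.finite_toSet _)).trans ?_
      rw [Set.ncard_coe_finset, Finset.card_range]
    have h1 : (1:ℝ) ≤ t ^ ((2:ℝ)/3) := Real.one_le_rpow ht.le (by norm_num)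
    have h2 : (sCount Q t : ℝ) ≤ n + n := by exact_mod_cast hcard
    rw [Real.mul_rpow hD ht0.le] at hnle
    nlinarith

lemma h_nonneg (η w : ℝ) (h1 : 1/2 < η) (hw : 0 < w) :
    0 ≤ w ^ (η - 3/2) * ((1 + w) ^ (η - 1/2) - 1) := by
  have := Real.one_le_rpow (x := 1 + w) (z := η - 1/2) (by linarith) (by linarith)
  have h2 : 0 ≤ w ^ (η - 3/2) := by positivity
  exact mul_nonneg h2 (by linarith)

lemma h_le_rpow (η w : ℝ) (h1 : 1/2 < η) (h2 : η < 1) (hw : 0 < w) :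
    w ^ (η - 3/2) * ((1 + w) ^ (η - 1/2) - 1) ≤ w ^ (2 * η - 2) := by
  have h3 : (1 + w) ^ (η - 1/2) ≤ 1 + w ^ (η - 1/2) := by
    lift w to ℝ≥0 using hw.le
    have := NNReal.rpow_add_le_add_rpow (p := η - 1/2) 1 w (by linarith) (by linarith)
    rw [NNReal.one_rpow] at this
    exact_mod_cast this
  calc _ ≤ w ^ (η - 3/2) * w ^ (η - 1/2) := by
        gcongr; linarith
    _ = _ := by rw [← Real.rpow_add hw]; congr 1; ring

lemma h_le_one (η w : ℝ) (h1 : 1/2 < η) (h2 : η < 1) (hw : 0 < w) :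
    w ^ (η - 3/2) * ((1 + w) ^ (η - 1/2) - 1) ≤ 1 := by
  rcases le_total w 1 with h | h
  · have h3 := rpow_one_add_le_one_add_mul_self (s := w) (p := η - 1/2) (by linarith)
      (by linarith) (by linarith)
    calc _ ≤ w ^ (η - 3/2) * w := by gcongr; nlinarith
      _ = w ^ (η - 1/2) := by
        nth_rewrite 2 [← Real.rpow_one w]
        rw [← Real.rpow_add hw]; congr 1; ring
      _ ≤ 1 := Real.rpow_le_one hw.le h (by linarith)
  · exact (h_le_rpow η w h1 h2 hw).trans (Real.rpow_le_one_of_one_le_of_nonpos h (by linarith))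

lemma h_le_two (η w : ℝ) (h1 : 1/2 < η) (h2 : η < 1) (hw : 0 < w) :
    w ^ (η - 3/2) * ((1 + w) ^ (η - 1/2) - 1) ≤ 2 * (1 + w) ^ (2 * η - 2) := by
  have key : (1:ℝ) ≤ 2 * 2 ^ (2 * η - 2) := by
    have : (2:ℝ) * 2 ^ (2 * η - 2) = 2 ^ (2 * η - 1) := by
      nth_rewrite 1 [← Real.rpow_one 2]
      rw [← Real.rpow_add (by norm_num)]; congr 1; ring
    rw [this]
    exact Real.one_le_rpow (by norm_num) (by linarith)
  rcases le_total w 1 with h | h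
  · refine (h_le_one η w h1 h2 hw).trans (key.trans ?_)
    have := Real.rpow_le_rpow_of_nonpos (x := 1 + w) (y := 2) (z := 2 * η - 2) (by linarith)
      (by linarith) (by linarith)
    linarith
  · refine (h_le_rpow η w h1 h2 hw).trans ?_
    have h3 := Real.rpow_le_rpow_of_nonpos (x := (1 + w)) (y := 2 * w) (z := 2 * η - 2)
      (by linarith) (by linarith) (by linarith)
    rw [Real.mul_rpow (by norm_num) hw.le] at h3
    have h4 : 0 ≤ w ^ (2 * η - 2) := by positivity
    nlinarith

lemma h_meas (η : ℝ) : Measurable (fun w : ℝ => w ^ (η - 3/2) * ((1 + w) ^ (η - 1/2) - 1)) := by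
  fun_prop

lemma h_int (η s s' : ℝ) (h1 : 1/2 < η) (h2 : η < 1) (hs' : 0 ≤ s') :
    IntegrableOn (fun w : ℝ => w ^ (η - 3/2) * ((1 + w) ^ (η - 1/2) - 1)) (Ioc s' s) := by
  apply Measure.integrableOn_of_bounded (M := 1) (by simp) (h_meas η).aestronglyMeasurable
  filter_upwards [ae_restrict_mem measurableSet_Ioc] with w hw
  have hw0 : 0 < w := hs'.trans_lt hw.1
  rw [Real.norm_of_nonneg (h_nonneg η w h1 hw0)]
  exact h_le_one η w h1 h2 hw0

lemma Phi_of_nonpos (η s : ℝ) (hs : s ≤ 0) : PhiFn η s = 0 := by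
  simp [PhiFn, Ioo_eq_empty (not_lt.2 hs)]

lemma Phi_sub (η s s' : ℝ) (h1 : 1/2 < η) (h2 : η < 1) (hs' : 0 ≤ s') (hss : s' ≤ s) :
    PhiFn η s - PhiFn η s' =
      ∫ w in Ioc s' s, w ^ (η - 3/2) * ((1 + w) ^ (η - 1/2) - 1) := by
  unfold PhiFn
  rw [← integral_Ioc_eq_integral_Ioo, ← integral_Ioc_eq_integral_Ioo,
    ← Ioc_union_Ioc_eq_Ioc hs' hss,
    setIntegral_union (Ioc_disjoint_Ioc_of_le le_rfl) measurableSet_Ioc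
      (h_int η _ _ h1 h2 le_rfl) (h_int η _ _ h1 h2 hs')]
  ring

lemma Phi_sub_nonneg (η s s' : ℝ) (h1 : 1/2 < η) (h2 : η < 1) (hs' : 0 ≤ s') (hss : s' ≤ s) :
    0 ≤ PhiFn η s - PhiFn η s' := by
  rw [Phi_sub η s s' h1 h2 hs' hss]
  exact setIntegral_nonneg measurableSet_Ioc
    (fun w hw => h_nonneg η w h1 (hs'.trans_lt hw.1))

lemma Phi_sub_le (η s s' : ℝ) (h1 : 1/2 < η) (h2 : η < 1) (hs' : 0 ≤ s') (hss : s' ≤ s) :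
    PhiFn η s - PhiFn η s' ≤ (s - s') * (2 * (1 + s') ^ (2 * η - 2)) := by
  rw [Phi_sub η s s' h1 h2 hs' hss]
  have : ∫ w in Ioc s' s, w ^ (η - 3/2) * ((1 + w) ^ (η - 1/2) - 1) ≤
      ∫ w in Ioc s' s, (2 * (1 + s') ^ (2 * η - 2)) := by
    apply setIntegral_mono_on (h_int η _ _ h1 h2 hs')
      (integrableOn_const (by simp)) measurableSet_Ioc
    intro w hw
    refine (h_le_two η w h1 h2 (hs'.trans_lt hw.1)).trans ?_
    have := Real.rpow_le_rpow_of_nonpos (x := 1 + s') (y := 1 + w) (z := 2 * η - 2)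
      (by linarith) (by linarith [hw.1]) (by linarith)
    linarith
  refine this.trans (le_of_eq ?_)
  simp [hss]

lemma Phi_nonneg (η s : ℝ) (h1 : 1/2 < η) (h2 : η < 1) : 0 ≤ PhiFn η s := by
  rcases le_total s 0 with h | h
  · rw [Phi_of_nonpos η s h]
  · have := Phi_sub_nonneg η s 0 h1 h2 le_rfl h
    rw [Phi_of_nonpos η 0 le_rfl] at this
    linarith

lemma Phi_le (η s : ℝ) (h1 : 1/2 < η) (h2 : η < 1) (hs : 0 ≤ s) :
    PhiFn η s ≤ s ^ (2 * η - 1) / (2 * η - 1) := by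
  have h3 := Phi_sub η s 0 h1 h2 le_rfl hs
  rw [Phi_of_nonpos η 0 le_rfl, sub_zero] at h3
  rw [h3]
  have hi : IntervalIntegrable (fun w : ℝ => w ^ (2 * η - 2)) volume 0 s :=
    intervalIntegral.intervalIntegrable_rpow' (by linarith)
  have : ∫ w in Ioc 0 s, w ^ (η - 3/2) * ((1 + w) ^ (η - 1/2) - 1) ≤
      ∫ w in Ioc 0 s, w ^ (2 * η - 2) := by
    apply setIntegral_mono_on (h_int η _ _ h1 h2 le_rfl)
      ((intervalIntegrable_iff_integrableOn_Ioc_of_le hs).1 hi) measurableSet_Ioc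
    intro w hw
    exact h_le_rpow η w h1 h2 hw.1
  refine this.trans (le_of_eq ?_)
  rw [← intervalIntegral.integral_of_le hs, integral_rpow (Or.inl (by linarith)),
    Real.zero_rpow (by linarith), sub_zero]
  rw [show 2 * η - 2 + 1 = 2 * η - 1 by ring]

lemma Phi_mono (η : ℝ) (h1 : 1/2 < η) (h2 : η < 1) : Monotone (PhiFn η) := by
  intro s' s hss
  rcases le_total s' 0 with h | h
  · rw [Phi_of_nonpos η s' h]; exact Phi_nonneg η s h1 h2
  · linarith [Phi_sub_nonneg η s s' h1 h2 h hss]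

lemma g_bound (η x y : ℝ) (h1 : 1/2 < η) (h2 : η < 1) (hx1 : x < 1) (hy : 0 < y) :
    y ^ (η - 1/2) * PhiFn η ((x - y) / y) ≤ y ^ (-(η - 1/2)) / (2 * η - 1) := by
  have hp : 0 < 2 * η - 1 := by linarith
  rcases le_total x y with h | h
  · rw [Phi_of_nonpos η _ (div_nonpos_of_nonpos_of_nonneg (by linarith) hy.le), mul_zero]
    positivity
  · have h3 : (x - y) / y ≤ 1 / y := by gcongr; linarith
    have h0 : 0 ≤ (x - y) / y := div_nonneg (by linarith) hy.le
    have h4 : PhiFn η ((x - y) / y) ≤ (1 / y) ^ (2 * η - 1) / (2 * η - 1) :=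
      (Phi_le η _ h1 h2 h0).trans (by gcongr)
    calc _ ≤ y ^ (η - 1/2) * ((1 / y) ^ (2 * η - 1) / (2 * η - 1)) := by gcongr
      _ = _ := by
        rw [one_div y, Real.inv_rpow hy.le, ← Real.rpow_neg hy.le, ← mul_div_assoc,
          ← Real.rpow_add hy]
        congr 2; ring

lemma g_diff_aux (η x y y' : ℝ) (h1 : 1/2 < η) (h2 : η < 1) (hx1 : x < 1) (hy : 0 < y)
    (hyy : y ≤ y') (hyx : y' ≤ x) :
    |y ^ (η - 1/2) * PhiFn η ((x - y) / y) - y' ^ (η - 1/2) * PhiFn η ((x - y') / y')|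
      ≤ 3 * ((y' - y) * y ^ (-1 - (η - 1/2))) := by
  have hp : 0 < 2 * η - 1 := by linarith
  have hy' : 0 < y' := hy.trans_le hyy
  have hx : 0 < x := hy'.trans_le hyx
  set a := η - 1/2 with ha
  have ha0 : 0 < a := by linarith
  set s := (x - y) / y with hs
  set s' := (x - y') / y' with hs'
  have hs'0 : 0 ≤ s' := div_nonneg (by linarith) hy'.le
  have e1 : 1 + s' = x / y' := by rw [hs']; field_simp; ring
  have e2 : s - s' = x * (y' - y) / (y * y') := by rw [hs, hs']; field_simp; ring
  have hss : s' ≤ s := by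
    have : 0 ≤ s - s' := by rw [e2]; exact div_nonneg (mul_nonneg hx.le (by linarith)) (by positivity)
    linarith
  have A0 := Phi_sub_nonneg η s s' h1 h2 hs'0 hss
  have A1 := Phi_sub_le η s s' h1 h2 hs'0 hss
  have hΔ : 0 ≤ y' - y := by linarith
  -- first term
  have A2 : PhiFn η s - PhiFn η s' ≤ 2 * ((y' - y) * y ^ (-1 - 2 * a)) := by
    refine A1.trans ?_
    rw [e1, e2]
    have : x * (y' - y) / (y * y') * (2 * (x / y') ^ (2 * η - 2))
        = 2 * ((y' - y) * (y⁻¹ * (x / y') ^ (2 * a))) := by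
      have : (x / y') ^ (2 * a) = (x / y') ^ (2 * η - 2) * (x / y') := by
        nth_rewrite 3 [← Real.rpow_one (x / y')]
        rw [← Real.rpow_add (by positivity)]; congr 1; rw [ha]; ring
      rw [this]; field_simp
    rw [this]
    have h5 : (x / y') ^ (2 * a) ≤ (y⁻¹) ^ (2 * a) := by
      apply Real.rpow_le_rpow (by positivity) _ (by positivity)
      rw [← one_div]
      gcongr
    have h6 : y ^ (-1 - 2 * a) = y⁻¹ * y⁻¹ ^ (2 * a) := by
      rw [Real.inv_rpow hy.le, ← Real.rpow_neg hy.le, ← Real.rpow_neg_one, ← Real.rpow_add hy]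
      congr 1
    rw [h6]
    gcongr
  have A3 : y ^ a * (PhiFn η s - PhiFn η s') ≤ 2 * ((y' - y) * y ^ (-1 - a)) := by
    have : y ^ (-1 - a) = y ^ a * y ^ (-1 - 2 * a) := by
      rw [← Real.rpow_add hy]; congr 1; ring
    rw [this]
    calc _ ≤ y ^ a * (2 * ((y' - y) * y ^ (-1 - 2 * a))) := by gcongr
      _ = _ := by ring
  -- second term
  have B0 : y ^ a ≤ y' ^ a := Real.rpow_le_rpow hy.le hyy ha0.le
  have B1 : y' ^ a - y ^ a ≤ a * ((y' - y) * y ^ (a - 1)) := by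
    have h7 := rpow_one_add_le_one_add_mul_self (s := (y' - y) / y) (p := a)
      (by have := div_nonneg hΔ hy.le; linarith) ha0.le (by linarith)
    have h8 : y' = y * (1 + (y' - y) / y) := by field_simp; ring
    have h9 : y' ^ a = y ^ a * (1 + (y' - y) / y) ^ a := by
      rw [← Real.mul_rpow hy.le (by have := div_nonneg hΔ hy.le; linarith), ← h8]
    have h10 : y ^ (a - 1) = y ^ a / y := by rw [Real.rpow_sub_one hy.ne']
    rw [h9, h10]
    have := mul_le_mul_of_nonneg_left h7 (Real.rpow_nonneg hy.le a)
    calc _ ≤ y ^ a * (1 + a * ((y' - y) / y)) - y ^ a := by linarith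
      _ = _ := by ring
  have B2 : PhiFn η s' ≤ y ^ (-(2 * a)) / (2 * a) := by
    have e3 : 2 * η - 1 = 2 * a := by rw [ha]; ring
    refine (Phi_le η s' h1 h2 hs'0).trans ?_
    rw [e3, Real.rpow_neg hy.le, ← Real.inv_rpow hy.le]
    gcongr
    have : s' ≤ 1 / y := by
      rw [hs']; gcongr; linarith
    simpa using this
  have B3 : (y' ^ a - y ^ a) * PhiFn η s' ≤ (y' - y) * y ^ (-1 - a) := by
    have hPhi := Phi_nonneg η s' h1 h2
    calc _ ≤ (a * ((y' - y) * y ^ (a - 1))) * (y ^ (-(2 * a)) / (2 * a)) := by gcongr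
      _ = (1/2) * ((y' - y) * (y ^ (a - 1) * y ^ (-(2 * a)))) := by field_simp
      _ = (1/2) * ((y' - y) * y ^ (-1 - a)) := by
        rw [← Real.rpow_add hy]; congr 3; ring
      _ ≤ _ := by
        have : 0 ≤ (y' - y) * y ^ (-1 - a) := by positivity
        linarith
  have C1 : 0 ≤ y ^ a * (PhiFn η s - PhiFn η s') := mul_nonneg (by positivity) A0
  have C2 : 0 ≤ (y' ^ a - y ^ a) * PhiFn η s' :=
    mul_nonneg (by linarith) (Phi_nonneg η s' h1 h2)
  rw [abs_le]
  constructor <;> nlinarith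

lemma g_diff (η x y y' : ℝ) (h1 : 1/2 < η) (h2 : η < 1) (hx1 : x < 1) (hy : 0 < y)
    (hyy : y ≤ y') :
    |y ^ (η - 1/2) * PhiFn η ((x - y) / y) - y' ^ (η - 1/2) * PhiFn η ((x - y') / y')|
      ≤ 3 * ((y' - y) * y ^ (-1 - (η - 1/2))) := by
  have hy' : 0 < y' := hy.trans_le hyy
  have z : ∀ z, 0 < z → x ≤ z → PhiFn η ((x - z) / z) = 0 := fun z hz h =>
    Phi_of_nonpos η _ (div_nonpos_of_nonpos_of_nonneg (by linarith) hz.le)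
  rcases le_total x y with h | h
  · rw [z y hy h, z y' hy' (h.trans hyy)]
    have : 0 ≤ y' - y := by linarith
    simp only [mul_zero, sub_zero, abs_zero]
    positivity
  rcases le_total y' x with h' | h'
  · exact g_diff_aux η x y y' h1 h2 hx1 hy hyy h'
  · have := g_diff_aux η x y x h1 h2 hx1 hy h le_rfl
    rw [z x (hy.trans_le h) le_rfl] at this
    rw [z y' hy' h', mul_zero]
    rw [mul_zero] at this
    refine this.trans ?_
    gcongr

lemma q_eq (H : ℝ → ℝ) (x y : ℝ) (hx1 : x < 1) (hy : 0 < y) :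
    qTilde₂ H x y = cstar (H x) * (y ^ (H x - 1/2) * PhiFn (H x) ((x - y) / y)) := by
  unfold qTilde₂
  split_ifs with h
  · ring
  · rw [Phi_of_nonpos]
    · simp
    · apply div_nonpos_of_nonpos_of_nonneg _ hy.le
      by_contra! hcon
      exact h ⟨hy, by linarith, hx1⟩

/-- Step function attached to the graded mesh. -/
def stepFn (n p : ℕ) (c : Fin n → ℂ) (y : ℝ) : ℂ :=
  if h : ⌊(n:ℝ) * y ^ ((1:ℝ) / p)⌋₊ < n then c ⟨⌊(n:ℝ) * y ^ ((1:ℝ) / p)⌋₊, h⟩ else 0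

lemma stepFn_meas (n p : ℕ) (c : Fin n → ℂ) : Measurable (stepFn n p c) := by
  have h1 : Measurable (fun y : ℝ => ⌊(n:ℝ) * y ^ ((1:ℝ) / p)⌋₊) :=
    Nat.measurable_floor.comp (by fun_prop)
  exact (measurable_from_nat (f := fun k : ℕ => if h : k < n then c ⟨k, h⟩ else 0)).comp h1

lemma stepFn_bound (n p : ℕ) (c : Fin n → ℂ) (y : ℝ) : ‖stepFn n p c y‖ ≤ ‖c‖ := by
  unfold stepFn
  split_ifs
  · exact norm_le_pi_norm c _
  · simp

lemma stepFn_memLp (n p : ℕ) (c : Fin n → ℂ) (μ : Measure ℝ) [IsFiniteMeasure μ] :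
    MemLp (stepFn n p c) 2 μ :=
  MemLp.of_bound (stepFn_meas n p c).aestronglyMeasurable ‖c‖
    (Eventually.of_forall (stepFn_bound n p c))

/-- The linear map sending coefficients to the step function. -/
def stepLin (n p : ℕ) (μ : Measure ℝ) [IsFiniteMeasure μ] : (Fin n → ℂ) →ₗ[ℂ] Lp ℂ 2 μ where
  toFun c := (stepFn_memLp n p c μ).toLp
  map_add' c d := by
    rw [← MemLp.toLp_add]
    congr 1
    funext y
    simp only [stepFn, Pi.add_apply]
    split_ifs <;> simp
  map_smul' a c := by
    rw [RingHom.id_apply, ← MemLp.toLp_const_smul]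
    congr 1
    funext y
    simp only [stepFn, Pi.smul_apply]
    split_ifs <;> simp

lemma mesh (q : ℝ → ℝ) (M b : ℝ) (n p : ℕ) (hn : 1 ≤ n) (hp : 1 ≤ p) (hM : 0 ≤ M)
    (h1 : ∀ y ∈ Ioo (0:ℝ) 1, |q y| ≤ M * y ^ (-b))
    (h2 : ∀ y ∈ Ioo (0:ℝ) 1, ∀ y', y ≤ y' → |q y - q y'| ≤ M * ((y' - y) * y ^ (-1 - b))) :
    ∃ c : Fin n → ℂ, ∀ y ∈ Ioo (0:ℝ) 1,
      ‖(q y : ℂ) - stepFn n p c y‖ ≤ M * p * 2 ^ p / n * y ^ (-(b + 1 / p)) := by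
  refine ⟨fun j => if (j : ℕ) = 0 then 0 else ((q ((((j : ℕ) + 1 : ℝ) / n) ^ p) : ℝ) : ℂ), ?_⟩
  intro y hy
  have hy0 : 0 < y := hy.1
  have hp0 : (0:ℝ) < p := by exact_mod_cast hp
  have hp1 : (1:ℝ) ≤ p := by exact_mod_cast hp
  have hn0 : (0:ℝ) < n := by exact_mod_cast hn
  set u : ℝ := y ^ ((1:ℝ) / p) with hu
  have hu0 : 0 < u := by positivity
  have hu1 : u < 1 := Real.rpow_lt_one hy0.le hy.2 (by positivity)
  have hup : u ^ p = y := by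
    rw [hu, ← Real.rpow_natCast, ← Real.rpow_mul hy0.le, one_div_mul_cancel hp0.ne', Real.rpow_one]
  have hj : ⌊(n:ℝ) * u⌋₊ < n := by
    rw [Nat.floor_lt (by positivity)]
    nlinarith
  have hpow : y ^ (-(b + 1 / p)) = y ^ (-b) / u := by
    rw [neg_add, Real.rpow_add hy0, Real.rpow_neg hy0.le (1 / (p:ℝ)), ← hu, div_eq_mul_inv]
  have h2p : (1:ℝ) ≤ 2 ^ p := one_le_pow₀ (by norm_num)
  have hstep : ∀ c : Fin n → ℂ, stepFn n p c y = c ⟨⌊(n:ℝ) * u⌋₊, hj⟩ := by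
    intro c
    unfold stepFn
    rw [dif_pos]
  rw [hstep]
  simp only
  split_ifs with h0
  · rw [Nat.floor_eq_zero] at h0
    rw [sub_zero, Complex.norm_real, Real.norm_eq_abs]
    refine (h1 y hy).trans ?_
    rw [hpow]
    have hge : 1 ≤ (p * 2 ^ p) * (1 / (n * u)) := by
      have : 1 ≤ 1 / (n * u) := by rw [one_le_div (by positivity)]; exact h0.le
      have h3 : (1:ℝ) ≤ p * 2 ^ p := one_le_mul_of_one_le_of_one_le hp1 h2p
      exact one_le_mul_of_one_le_of_one_le h3 this
    have : M * p * 2 ^ p / n * (y ^ (-b) / u)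
        = (M * y ^ (-b)) * ((p * 2 ^ p) * (1 / (n * u))) := by field_simp
    rw [this]
    exact le_mul_of_one_le_right (by positivity) hge
  · rw [← Complex.ofReal_sub, Complex.norm_real, Real.norm_eq_abs]
    set j := ⌊(n:ℝ) * u⌋₊ with hjdef
    have hj1 : (1:ℝ) ≤ j := by exact_mod_cast Nat.one_le_iff_ne_zero.2 h0
    have hjle : (j:ℝ) ≤ n * u := Nat.floor_le (by positivity)
    have hjlt : n * u < j + 1 := Nat.lt_floor_add_one _
    set u' : ℝ := ((j:ℝ) + 1) / n with hu'
    have huu : u ≤ u' := by rw [hu', le_div_iff₀ hn0]; linarith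
    have hud : u' - u ≤ 1 / n := by
      rw [hu', sub_le_iff_le_add, div_le_iff₀ hn0, add_mul, one_div_mul_cancel hn0.ne']
      linarith
    have hu2 : u' ≤ 2 * u := by
      rw [hu', div_le_iff₀ hn0]; linarith
    have hyy : y ≤ u' ^ p := by rw [← hup]; gcongr
    refine (h2 y hy _ hyy).trans ?_
    have hdiff : u' ^ p - y ≤ p * 2 ^ p / n * (y / u) := by
      have h3 := abs_pow_sub_pow_le u' u p
      have hu'0 : 0 < u' := hu0.trans_le huu
      rw [abs_of_pos hu'0, abs_of_pos hu0, max_eq_left huu, hup, abs_of_nonneg (by linarith : 0 ≤ u' - u)] at h3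
      refine (le_abs_self _).trans (h3.trans ?_)
      have h4 : u' ^ (p - 1) ≤ 2 ^ p * (y / u) := by
        calc u' ^ (p - 1) ≤ (2 * u) ^ (p - 1) := by gcongr
          _ = 2 ^ (p - 1) * u ^ (p - 1) := mul_pow _ _ _
          _ ≤ 2 ^ p * u ^ (p - 1) := by
            gcongr
            · norm_num
            · omega
          _ = _ := by
            rw [← hup, pow_sub₀ u hu0.ne' hp, pow_one, div_eq_mul_inv]
      calc (u' - u) * p * u' ^ (p - 1) ≤ 1 / n * p * (2 ^ p * (y / u)) := by gcongr
        _ = _ := by ring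
    have hexp : y ^ (-1 - b) = y ^ (-b) / y := by
      rw [← Real.rpow_sub_one hy0.ne']; congr 1; ring
    rw [hpow, hexp]
    calc _ ≤ M * (p * 2 ^ p / n * (y / u) * (y ^ (-b) / y)) := by gcongr
      _ = _ := by field_simp

lemma w_memLp (γ : ℝ) (hγ : γ < 1/2) :
    MemLp (fun y : ℝ => y ^ (-γ)) 2 (volume.restrict (Ioo (0:ℝ) 1)) := by
  have hm : Measurable (fun y : ℝ => y ^ (-γ)) := by fun_prop
  rw [memLp_two_iff_integrable_sq hm.aestronglyMeasurable]
  have hi : IntervalIntegrable (fun w : ℝ => w ^ (-(2 * γ))) volume 0 1 :=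
    intervalIntegral.intervalIntegrable_rpow' (by linarith)
  have hi2 := ((intervalIntegrable_iff_integrableOn_Ioc_of_le zero_le_one).1 hi).mono_set
    Ioo_subset_Ioc_self
  refine hi2.congr_fun (fun y hy => ?_) measurableSet_Ioo
  simp only
  rw [← Real.rpow_natCast, ← Real.rpow_mul hy.1.le]
  congr 1; push_cast; ring

lemma cstar_cont : ContinuousOn cstar (Ioo (1/2:ℝ) 1) := by
  have hG : ∀ z : ℝ, 0 < z → ContinuousAt Real.Gamma z := fun z hz =>
    (Real.differentiableAt_Gamma (fun m => by
      have : (0:ℝ) ≤ m := by positivity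
      linarith)).continuousAt
  intro h hh
  apply ContinuousAt.continuousWithinAt
  unfold cstar
  have g1 : ContinuousAt (fun H : ℝ => Real.Gamma (3/2 - H)) h :=
    ContinuousAt.comp (f := fun H : ℝ => 3/2 - H) (g := Real.Gamma) (hG _ (by linarith [hh.2])) (by fun_prop)
  have g2 : ContinuousAt (fun H : ℝ => Real.Gamma (2 - 2 * H)) h :=
    ContinuousAt.comp (f := fun H : ℝ => 2 - 2 * H) (g := Real.Gamma) (hG _ (by linarith [hh.2])) (by fun_prop)
  have g3 : ContinuousAt (fun H : ℝ => Real.Gamma (H - 1/2)) h :=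
    ContinuousAt.comp (f := fun H : ℝ => H - 1/2) (g := Real.Gamma) (hG _ (by linarith [hh.1])) (by fun_prop)
  have n2 := Real.Gamma_pos_of_pos (s := 2 - 2 * h) (by linarith [hh.2])
  have n3 := Real.Gamma_pos_of_pos (s := h - 1/2) (by linarith [hh.1])
  apply ContinuousAt.sqrt
  apply ContinuousAt.div _ (g2.mul g3) (mul_ne_zero n2.ne' n3.ne')
  exact ContinuousAt.mul (by fun_prop) g1

lemma H_cont (H : ℝ → ℝ) (r : ℝ) (hr : 0 < r) (hHol : HolderOn H r (Icc 0 1)) :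
    ContinuousOn H (Icc 0 1) := by
  obtain ⟨C, hC⟩ := hHol
  intro x hx
  rw [ContinuousWithinAt, tendsto_iff_dist_tendsto_zero]
  have hlim : Tendsto (fun y : ℝ => C * |y - x| ^ r) (nhdsWithin x (Icc 0 1)) (nhds 0) := by
    have : ContinuousAt (fun y : ℝ => C * |y - x| ^ r) x := by
      apply ContinuousAt.mul continuousAt_const
      apply ContinuousAt.rpow_const (by fun_prop) (Or.inr hr.le)
    have h2 := this.tendsto
    simp only [sub_self, abs_zero, Real.zero_rpow hr.ne', mul_zero] at h2
    exact h2.mono_left nhdsWithin_le_nhds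
  refine squeeze_zero' (Eventually.of_forall fun _ => dist_nonneg) ?_ hlim
  filter_upwards [self_mem_nhdsWithin] with y hy
  rw [Real.dist_eq]
  exact hC y hy x hx

lemma q_bounds (H : ℝ → ℝ) (r : ℝ) (hr : 0 < r) (hHol : HolderOn H r (Icc 0 1))
    (hrange : ∀ x ∈ Icc (0:ℝ) 1, 1/2 < H x ∧ H x < 1) :
    ∃ M b : ℝ, 0 ≤ M ∧ b < 1/2 ∧ ∀ x ∈ Ioo (0:ℝ) 1,
      (∀ y ∈ Ioo (0:ℝ) 1, |qTilde₂ H x y| ≤ M * y ^ (-b)) ∧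
      (∀ y ∈ Ioo (0:ℝ) 1, ∀ y', y ≤ y' →
        |qTilde₂ H x y - qTilde₂ H x y'| ≤ M * ((y' - y) * y ^ (-1 - b))) := by
  have hc := H_cont H r hr hHol
  obtain ⟨x0, hx0, hmin⟩ := isCompact_Icc.exists_isMinOn (nonempty_Icc.2 zero_le_one) hc
  obtain ⟨x1, hx1, hmax⟩ := isCompact_Icc.exists_isMaxOn (nonempty_Icc.2 zero_le_one) hc
  obtain ⟨x2, hx2, hcm⟩ := isCompact_Icc.exists_isMaxOn (nonempty_Icc.2 zero_le_one)
    (cstar_cont.comp hc (fun x hx => hrange x hx))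
  have ha := (hrange x0 hx0).1
  have hb := (hrange x1 hx1).2
  have hc0 : ∀ z, 0 ≤ cstar z := fun z => Real.sqrt_nonneg _
  have hh0 : 0 < 2 * H x0 - 1 := by linarith
  refine ⟨cstar (H x2) * (1 / (2 * H x0 - 1) + 3), H x1 - 1/2, ?_, by linarith, ?_⟩
  · have := hc0 (H x2)
    positivity
  intro x hx
  have hxI : x ∈ Icc (0:ℝ) 1 := Ioo_subset_Icc_self hx
  have e0 : H x0 ≤ H x := hmin hxI
  have e1 : H x ≤ H x1 := hmax hxI
  have e2 : cstar (H x) ≤ cstar (H x2) := hcm hxI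
  have r1 := (hrange x hxI).1
  have r2 := (hrange x hxI).2
  have hcx := hc0 (H x)
  have hcx2 := hc0 (H x2)
  constructor
  · intro y hy
    rw [q_eq H x y hx.2 hy.1, abs_mul, abs_of_nonneg hcx, mul_assoc]
    have hy0 := hy.1
    have g0 : 0 ≤ y ^ (H x - 1/2) * PhiFn (H x) ((x - y) / y) :=
      mul_nonneg (by positivity) (Phi_nonneg _ _ r1 r2)
    rw [abs_of_nonneg g0]
    have g1 := g_bound (H x) x y r1 r2 hx.2 hy.1
    have g2 : y ^ (-(H x - 1/2)) ≤ y ^ (-(H x1 - 1/2)) :=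
      Real.rpow_le_rpow_of_exponent_ge hy.1 hy.2.le (by linarith)
    have g3 : y ^ (-(H x - 1/2)) / (2 * H x - 1) ≤ (1 / (2 * H x0 - 1) + 3) * y ^ (-(H x1 - 1/2)) := by
      calc _ ≤ y ^ (-(H x1 - 1/2)) / (2 * H x0 - 1) := by gcongr
        _ = (1 / (2 * H x0 - 1)) * y ^ (-(H x1 - 1/2)) := by ring
        _ ≤ _ := by
          gcongr
          linarith
    exact mul_le_mul e2 (g1.trans g3) g0 hcx2
  · intro y hy y' hyy
    have hy0 := hy.1
    rw [q_eq H x y hx.2 hy.1, q_eq H x y' hx.2 (hy.1.trans_le hyy), ← mul_sub, abs_mul,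
      abs_of_nonneg hcx, mul_assoc]
    have g1 := g_diff (H x) x y y' r1 r2 hx.2 hy.1 hyy
    have g2 : y ^ (-1 - (H x - 1/2)) ≤ y ^ (-1 - (H x1 - 1/2)) :=
      Real.rpow_le_rpow_of_exponent_ge hy.1 hy.2.le (by linarith)
    have hΔ : 0 ≤ y' - y := by linarith
    have g3 : 3 * ((y' - y) * y ^ (-1 - (H x - 1/2))) ≤
        (1 / (2 * H x0 - 1) + 3) * ((y' - y) * y ^ (-1 - (H x1 - 1/2))) := by
      have : 0 ≤ 1 / (2 * H x0 - 1) := by positivity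
      gcongr
      linarith
    exact mul_le_mul e2 (g1.trans g3) (abs_nonneg _) hcx2

lemma q_memLp (H : ℝ → ℝ) (x M b : ℝ) (hx : x ∈ Ioo (0:ℝ) 1) (r1 : 1/2 < H x) (r2 : H x < 1)
    (hb : b < 1/2) (h : ∀ y ∈ Ioo (0:ℝ) 1, |qTilde₂ H x y| ≤ M * y ^ (-b)) :
    MemLp (fun y => (qTilde₂ H x y : ℂ)) 2 (volume.restrict (Ioo (0:ℝ) 1)) := by
  have hmeas : Measurable (fun y => cstar (H x) * (y ^ (H x - 1/2) * PhiFn (H x) ((x - y) / y))) := by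
    have h1 : Measurable (fun y => PhiFn (H x) ((x - y) / y)) :=
      (Phi_mono (H x) r1 r2).measurable.comp (by fun_prop)
    fun_prop
  refine MemLp.of_le_mul (c := M) (w_memLp b hb) ?_ ?_
  · refine AEStronglyMeasurable.congr
      (Complex.measurable_ofReal.comp hmeas).aestronglyMeasurable ?_
    filter_upwards [ae_restrict_mem measurableSet_Ioo] with y hy
    simp only [Function.comp]
    rw [q_eq H x y hx.2 hy.1]
  · filter_upwards [ae_restrict_mem measurableSet_Ioo] with y hy
    have hy0 := hy.1
    rw [Complex.norm_real, Real.norm_eq_abs, Real.norm_of_nonneg (by positivity)]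
    exact h y hy
/-- Counting function bound for the remainder operator `Q̃₂` in the kernel decomposition
of the multifractal Brownian motion operator. -/
theorem qTilde₂_counting_bound
    (H : ℝ → ℝ) (r : ℝ) (hr : 0 < r) (hHol : HolderOn H r (Icc 0 1))
    (hrange : ∀ x ∈ Icc (0:ℝ) 1, 1/2 < H x ∧ H x < 1)
    (Q : Lp ℂ 2 (volume.restrict (Ioo (0:ℝ) 1)) →L[ℂ] Lp ℂ 2 (volume.restrict (Ioo (0:ℝ) 1)))
    (hQ : ∀ f : Lp ℂ 2 (volume.restrict (Ioo (0:ℝ) 1)),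
      ∀ᵐ x ∂(volume.restrict (Ioo (0:ℝ) 1)),
        (Q f : ℝ → ℂ) x = ∫ y in Ioo (0:ℝ) 1, (qTilde₂ H x y : ℂ) * (f : ℝ → ℂ) y) :
    IsCompactOperator (⇑Q) ∧
    ∃ C : ℝ, 0 < C ∧ ∀ t : ℝ, 1 < t → (sCount Q t : ℝ) ≤ C * t ^ ((2:ℝ)/3) := by

  classical
  obtain ⟨M, b, hM, hb, hqb⟩ := q_bounds H r hr hHol hrange
  obtain ⟨p, hp⟩ := exists_nat_gt (1 / (1/2 - b))
  have hb' : 0 < 1/2 - b := by linarith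
  have hp0 : (0:ℝ) < p := (by positivity : 0 < 1 / (1/2 - b)).trans hp
  have hp1 : 1 ≤ p := by exact_mod_cast hp0
  have hγ : b + 1 / p < 1/2 := by
    have : 1 / (p:ℝ) < 1/2 - b := by
      rw [div_lt_iff₀ hb'] at hp
      rw [div_lt_iff₀ hp0]; linarith
    linarith
  have hprob : IsProbabilityMeasure (volume.restrict (Ioo (0:ℝ) 1)) := ⟨by simp⟩
  have hmem : ∀ x ∈ Ioo (0:ℝ) 1, MemLp (fun y => (qTilde₂ H x y : ℂ)) 2 (volume.restrict (Ioo (0:ℝ) 1)) := fun x hx =>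
    q_memLp H x M b hx (hrange x (Ioo_subset_Icc_self hx)).1 (hrange x (Ioo_subset_Icc_self hx)).2
      hb (hqb x hx).1
  let k : ℝ → Lp ℂ 2 (volume.restrict (Ioo (0:ℝ) 1)) := fun x =>
    if hx : MemLp (fun y => (qTilde₂ H x y : ℂ)) 2 (volume.restrict (Ioo (0:ℝ) 1)) then hx.toLp else 0
  have hkx : ∀ x (hx : x ∈ Ioo (0:ℝ) 1), k x = (hmem x hx).toLp := fun x hx => dif_pos (hmem x hx)
  have hQk : ∀ f : Lp ℂ 2 (volume.restrict (Ioo (0:ℝ) 1)), ∀ᵐ x ∂(volume.restrict (Ioo (0:ℝ) 1)), (Q f : ℝ → ℂ) x = inner ℂ (k x) f := by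
    intro f
    filter_upwards [hQ f, ae_restrict_mem measurableSet_Ioo] with x hx hxI
    rw [hx, hkx x hxI, L2.inner_def]
    apply integral_congr_ae
    filter_upwards [(hmem x hxI).coeFn_toLp] with y hy
    rw [hy]
    simp [mul_comm]
  let w := (w_memLp (b + 1 / p) hγ).toLp
  refine compact_and_count Q (M * p * 2 ^ p * ‖w‖) (by positivity) (fun n hn => ?_)
  have hn0 : (0:ℝ) < n := by exact_mod_cast hn
  refine sVal_bound (volume.restrict (Ioo (0:ℝ) 1)) Q k hQk (LinearMap.range (stepLin n p (volume.restrict (Ioo (0:ℝ) 1)))) n n ?_ _ (by positivity) ?_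
  · refine (LinearMap.finrank_range_le _).trans ?_
    simp
  · filter_upwards [ae_restrict_mem measurableSet_Ioo] with x hx
    obtain ⟨c, hc⟩ := mesh (qTilde₂ H x) M b n p hn hp1 hM (hqb x hx).1 (hqb x hx).2
    refine ⟨stepLin n p (volume.restrict (Ioo (0:ℝ) 1)) c, ⟨c, rfl⟩, ?_⟩
    have : ‖k x - stepLin n p (volume.restrict (Ioo (0:ℝ) 1)) c‖ ≤ (M * p * 2 ^ p / n) * ‖w‖ := by
      apply Lp.norm_le_mul_norm_of_ae_le_mul
      have h1 : (stepLin n p (volume.restrict (Ioo (0:ℝ) 1)) c : ℝ → ℂ) =ᵐ[(volume.restrict (Ioo (0:ℝ) 1))] stepFn n p c :=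
        (stepFn_memLp n p c (volume.restrict (Ioo (0:ℝ) 1))).coeFn_toLp
      rw [hkx x hx]
      filter_upwards [h1, (hmem x hx).coeFn_toLp, (w_memLp (b + 1 / p) hγ).coeFn_toLp,
        Lp.coeFn_sub (hmem x hx).toLp (stepLin n p (volume.restrict (Ioo (0:ℝ) 1)) c),
        ae_restrict_mem measurableSet_Ioo] with y e1 e2 e3 e4 hy
      rw [e4, Pi.sub_apply, e1, e2, e3]
      have hy0 := hy.1
      rw [Real.norm_of_nonneg (by positivity)]
      exact hc y hy
    refine this.trans (le_of_eq ?_)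
    ring
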